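/- Let n ≥ 1, let X ⊂ ℝ^n be a nonempty compact set and let f : X → X be a continuous map. Suppose there exist an integer m ≥ 2 and δ > 0 such that f has the (m,δ)-separated preimage property on X. If f is Hölder continuous with exponent α ∈ (0,1), i.e. there is L > 0 with |f(x) − f(y)| ≤ L|x − y|^α for all x, y ∈ X, then H_h(X) > 0 for the gauge function h defined for small t > 0 by h(t) = (log(1/t))^{(log m)/(log α)} (note that (log m)/(log α) < 0, so h is increasing and h(t) → 0 as t → 0). -/

import Mathlib

open MeasureTheory Metric Set

open Filter Topology
open scoped ENNReal Finset

/-!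
Fix scales `ρ k = K * exp (-B / α ^ k)`. Hölder continuity makes `f` map `ρ (k + 1)`-close points to
`ρ k`-close points, and all these scales are small enough that a fibre of `f` has no two distinct
`ρ (k + 1)`-close points among its chosen preimages. Pulling a point back `N` times therefore gives
`m ^ N` points of `X` of which a set of diameter less than `ρ k` contains at most `m ^ (N - k)`, so
covering `X` by sets of diameters less than `ρ (k j)` requires `∑ m ^ (-k j) ≥ 1`. When
`ρ (k + 1) ≲ diam < ρ k`, the weight `m ^ (-k)` is comparable to `log (1 / diam) ^ (log m / log α)`.
-/

lemma exists_isOpen_superset_ediam_lt {E : Type*} [PseudoEMetricSpace E] {t : Set E} {r : ℝ≥0∞}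
    (ht : ediam t < r) : ∃ U, IsOpen U ∧ t ⊆ U ∧ ediam U < r := by
  obtain ⟨ε, hε, hlt⟩ := ENNReal.lt_iff_exists_add_pos_lt.1 ht
  refine ⟨thickening (ε / 2 : NNReal) t, isOpen_thickening,
    self_subset_thickening (by positivity) t, (ediam_thickening_le _).trans_lt ?_⟩
  rwa [← ENNReal.coe_ofNat, ← ENNReal.coe_mul, mul_div_cancel₀ ε two_ne_zero]

section SeparatedPreimages

variable {E : Type*} [PseudoMetricSpace E] {X : Set E} {f : E → E} {m : ℕ} {δ : ℝ}

/-- The `(m, δ)`-separated preimage property of `f` on `X`: every point of `X` has `m` preimages in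
`X` at mutual distances at least `δ`. The map is total on the ambient space, and nothing is required
of it outside `X`. -/
def HasSeparatedPreimages (f : E → E) (X : Set E) (m : ℕ) (δ : ℝ) : Prop :=
  ∀ y ∈ X, ∃ x : Fin m → E,
    (∀ i, x i ∈ X ∧ f (x i) = y) ∧ ∀ i j, i ≠ j → δ ≤ dist (x i) (x j)

lemma HasSeparatedPreimages.exists_finset_mapsTo (hsep : HasSeparatedPreimages f X m δ)
    (hδ : 0 < δ) {P : Finset E} (hP : ↑P ⊆ X) :
    ∃ P' : Finset E, ↑P' ⊆ X ∧ MapsTo f P' P ∧ #P' = m * #P ∧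
      ∀ x ∈ P', ∀ y ∈ P', f x = f y → dist x y < δ → x = y := by
  classical
  choose g hg hg_sep using hsep
  let branch : P × Fin m → E := fun q => g q.1 (hP q.1.2) q.2
  have f_branch (q) : f (branch q) = q.1 := (hg _ _ _).2
  have eq_of_close (q q') (hf : f (branch q) = f (branch q'))
      (hclose : dist (branch q) (branch q') < δ) : q = q' := by
    obtain ⟨y, i⟩ := q
    obtain ⟨y', j⟩ := q'
    obtain rfl : y = y' := Subtype.ext (by simpa only [f_branch] using hf)
    by_contra hne
    exact hclose.not_ge (hg_sep _ _ i j fun hij => hne (hij ▸ rfl))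
  have branch_injective : Function.Injective branch := fun q q' h =>
    eq_of_close q q' (congrArg f h) (by rwa [h, dist_self])
  refine ⟨Finset.univ.image branch, ?_, ?_, ?_, ?_⟩
  · simpa [Set.range_subset_iff] using fun y hy i => (hg y (hP hy) i).1
  · rintro _ hx
    obtain ⟨q, -, rfl⟩ := Finset.mem_image.1 hx
    exact f_branch q ▸ q.1.2
  · simp [Finset.card_image_of_injective _ branch_injective, mul_comm]
  · simp only [Finset.forall_mem_image]
    exact fun q _ q' _ hf hclose => congrArg branch (eq_of_close q q' hf hclose)

variable {ρ : ℕ → ℝ}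

lemma HasSeparatedPreimages.exists_finset_card_mul_pow_le (hsep : HasSeparatedPreimages f X m δ)
    (hδ : 0 < δ) (hm : m ≠ 0) (hX : X.Nonempty) (hρδ : ∀ k, ρ (k + 1) ≤ δ)
    (hρf : ∀ k, ∀ x ∈ X, ∀ y ∈ X, dist x y < ρ (k + 1) → dist (f x) (f y) < ρ k) (N : ℕ) :
    ∃ P : Finset E, P.Nonempty ∧ ↑P ⊆ X ∧
      ∀ k ≤ N, ∀ Q ⊆ P, (∀ x ∈ Q, ∀ y ∈ Q, dist x y < ρ k) → #Q * m ^ k ≤ #P := by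
  classical
  induction N with
  | zero =>
    obtain ⟨y, hy⟩ := hX
    refine ⟨{y}, Finset.singleton_nonempty y, by simpa using hy, ?_⟩
    intro k hk Q hQ _
    simpa [Nat.le_zero.1 hk] using Finset.card_le_card hQ
  | succ N ih =>
    obtain ⟨P, hPne, hPX, hP⟩ := ih
    obtain ⟨P', hP'X, hfP', hcard, hfibre⟩ := hsep.exists_finset_mapsTo hδ hPX
    refine ⟨P', Finset.card_pos.1 (hcard ▸ by positivity), hP'X, ?_⟩
    rintro (_ | k) hk Q hQ hclose
    · simpa using Finset.card_le_card hQ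
    have f_injOn : InjOn f Q := fun x hx y hy hxy =>
      hfibre x (hQ hx) y (hQ hy) hxy ((hclose x hx y hy).trans_le (hρδ k))
    have card_image_le : #(Q.image f) * m ^ k ≤ #P := by
      refine hP k (Nat.le_of_succ_le_succ hk) _ ?_ ?_
      · exact Finset.image_subset_iff.2 fun x hx => hfP' (hQ hx)
      · simp only [Finset.forall_mem_image]
        exact fun x hx y hy => hρf k x (hP'X (hQ hx)) y (hP'X (hQ hy)) (hclose x hx y hy)
    calc #Q * m ^ (k + 1) = m * (#(Q.image f) * m ^ k) := by
          rw [Finset.card_image_of_injOn f_injOn]; ring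
      _ ≤ m * #P := by gcongr
      _ = #P' := hcard.symm

lemma HasSeparatedPreimages.one_le_sum_inv_pow_of_subset_biUnion
    (hsep : HasSeparatedPreimages f X m δ) (hδ : 0 < δ) (hm : m ≠ 0) (hX : X.Nonempty)
    (hρδ : ∀ k, ρ (k + 1) ≤ δ)
    (hρf : ∀ k, ∀ x ∈ X, ∀ y ∈ X, dist x y < ρ (k + 1) → dist (f x) (f y) < ρ k)
    {ι : Type*} {s : Finset ι} {U : ι → Set E} {k : ι → ℕ}
    (hU : ∀ i, ediam (U i) < ENNReal.ofReal (ρ (k i))) (hXU : X ⊆ ⋃ i ∈ s, U i) :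
    1 ≤ ∑ i ∈ s, (m : ℝ≥0∞)⁻¹ ^ k i := by
  classical
  obtain ⟨P, hPne, hPX, hP⟩ :=
    hsep.exists_finset_card_mul_pow_le hδ hm hX hρδ hρf (s.sup k)
  have card_filter_le (i) (hi : i ∈ s) : (#{x ∈ P | x ∈ U i} : ℝ≥0∞) ≤ #P * (m : ℝ≥0∞)⁻¹ ^ k i := by
    rw [← ENNReal.inv_pow, ← div_eq_mul_inv, ENNReal.le_div_iff_mul_le (by simp [hm]) (by simp)]
    norm_cast
    refine hP (k i) (Finset.le_sup hi) _ (Finset.filter_subset _ _) fun x hx y hy => ?_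
    exact edist_lt_ofReal.1 <| (edist_le_ediam_of_mem (Finset.mem_filter.1 hx).2
      (Finset.mem_filter.1 hy).2).trans_lt (hU i)
  have subset_biUnion : P ⊆ s.biUnion fun i => {x ∈ P | x ∈ U i} := fun x hx => by
    simpa [hx] using hXU (hPX hx)
  have card_mul_one_le : (#P : ℝ≥0∞) * 1 ≤ #P * ∑ i ∈ s, (m : ℝ≥0∞)⁻¹ ^ k i :=
    calc (#P : ℝ≥0∞) * 1 ≤ ∑ i ∈ s, (#{x ∈ P | x ∈ U i} : ℝ≥0∞) := by
          rw [mul_one]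
          exact_mod_cast (Finset.card_le_card subset_biUnion).trans Finset.card_biUnion_le
      _ ≤ ∑ i ∈ s, #P * (m : ℝ≥0∞)⁻¹ ^ k i := Finset.sum_le_sum card_filter_le
      _ = #P * ∑ i ∈ s, (m : ℝ≥0∞)⁻¹ ^ k i := Finset.mul_sum .. |>.symm
  exact (ENNReal.mul_le_mul_iff_right (by simpa using hPne.ne_empty) (by simp)).1 card_mul_one_le

lemma HasSeparatedPreimages.one_le_tsum_inv_pow_of_subset_iUnion
    (hsep : HasSeparatedPreimages f X m δ) (hδ : 0 < δ) (hm : m ≠ 0) (hX : X.Nonempty)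
    (hXc : IsCompact X) (hρδ : ∀ k, ρ (k + 1) ≤ δ)
    (hρf : ∀ k, ∀ x ∈ X, ∀ y ∈ X, dist x y < ρ (k + 1) → dist (f x) (f y) < ρ k)
    {ι : Type*} {t : ι → Set E} {k : ι → ℕ}
    (ht : ∀ i, ediam (t i) < ENNReal.ofReal (ρ (k i))) (hXt : X ⊆ ⋃ i, t i) :
    1 ≤ ∑' i, (m : ℝ≥0∞)⁻¹ ^ k i := by
  choose U hUo htU hU using fun i => exists_isOpen_superset_ediam_lt (ht i)
  obtain ⟨s, hs⟩ := hXc.elim_finite_subcover U hUo (hXt.trans (iUnion_mono htU))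
  exact (hsep.one_le_sum_inv_pow_of_subset_biUnion hδ hm hX hρδ hρf hU hs).trans
    (ENNReal.sum_le_tsum s)

end SeparatedPreimages

section CoverWeights

variable {E : Type*} [EMetricSpace E] {h : ℝ≥0∞ → ℝ≥0∞} {w ρ : ℕ → ℝ≥0∞} {C r : ℝ≥0∞}

-- No lower bound on `h 0` is available: sets of diameter zero are given weights that sum to at most
-- `ε` instead, which is possible since `w` tends to zero.
lemma exists_lt_scale_and_weight_le_add (hw : Tendsto w atTop (𝓝 0)) (hρ : ∀ k, 0 < ρ k)
    (hwh : ∀ d, 0 < d → d ≤ r → ∃ k, d < ρ k ∧ w k ≤ C * h d) {t : Set E} (ht : ediam t ≤ r)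
    {ε : ℝ≥0∞} (hε : 0 < ε) :
    ∃ k, ediam t < ρ k ∧ w k ≤ C * (⨆ _ : t.Nonempty, h (ediam t)) + ε := by
  obtain hzero | hpos := eq_zero_or_pos (ediam t)
  · obtain ⟨k, hk⟩ := (hw.eventually_lt_const hε).exists
    exact ⟨k, hzero ▸ hρ k, hk.le.trans le_add_self⟩
  · obtain ⟨k, hk, hwk⟩ := hwh _ hpos ht
    refine ⟨k, hk, ?_⟩
    rw [iSup_pos (ediam_pos_iff.1 hpos).nonempty]
    exact hwk.trans le_self_add

lemma inv_le_mkMetric_of_one_le_tsum_weight [MeasurableSpace E] [BorelSpace E] {X : Set E}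
    (hw : Tendsto w atTop (𝓝 0)) (hρ : ∀ k, 0 < ρ k) (hr : 0 < r)
    (hwh : ∀ d, 0 < d → d ≤ r → ∃ k, d < ρ k ∧ w k ≤ C * h d)
    (hcover : ∀ (t : ℕ → Set E) (k : ℕ → ℕ), (∀ j, ediam (t j) < ρ (k j)) → X ⊆ ⋃ j, t j →
      1 ≤ ∑' j, w (k j)) :
    C⁻¹ ≤ Measure.mkMetric h X := by
  rw [Measure.mkMetric_apply]
  refine le_iSup₂_of_le r hr (le_iInf fun t => le_iInf fun hXt => le_iInf fun htr => ?_)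
  rw [← one_div]
  refine ENNReal.div_le_of_le_mul' (ENNReal.le_of_forall_pos_le_add fun ε hε _ => ?_)
  obtain ⟨ε', hε', hsum⟩ :=
    ENNReal.exists_pos_sum_of_countable' (ENNReal.coe_pos.2 hε).ne' ℕ
  choose k hk hwk using fun j => exists_lt_scale_and_weight_le_add hw hρ hwh (htr j) (hε' j)
  calc 1 ≤ ∑' j, w (k j) := hcover t k hk hXt
    _ ≤ ∑' j, (C * (⨆ _ : (t j).Nonempty, h (ediam (t j))) + ε' j) := ENNReal.tsum_le_tsum hwk
    _ = C * (∑' j, ⨆ _ : (t j).Nonempty, h (ediam (t j))) + ∑' j, ε' j := by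
      rw [ENNReal.tsum_add, ENNReal.tsum_mul_left]
    _ ≤ C * (∑' j, ⨆ _ : (t j).Nonempty, h (ediam (t j))) + ε := by gcongr

end CoverWeights

section HolderScale

variable {α B K L : ℝ}

/-- Scales adapted to an `α`-Hölder map with constant `L`: when `L * K ^ α ≤ K`, the map sends
points at distance less than the `(k + 1)`-st scale to points at distance less than the `k`-th. -/
noncomputable def holderScale (K B α : ℝ) (k : ℕ) : ℝ :=
  K * Real.exp (-(B / α ^ k))

lemma holderScale_pos (hK : 0 < K) (k : ℕ) : 0 < holderScale K B α k :=
  mul_pos hK (Real.exp_pos _)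

lemma holderScale_le (hK : 0 ≤ K) (hB : 0 ≤ B) (hα0 : 0 < α) (hα1 : α ≤ 1) (k : ℕ) :
    holderScale K B α k ≤ K * Real.exp (-B) := by
  unfold holderScale
  gcongr
  exact le_div_self hB (by positivity) (pow_le_one₀ hα0.le hα1)

lemma holderScale_succ_rpow (hK : 0 ≤ K) (hα0 : α ≠ 0) (k : ℕ) :
    holderScale K B α (k + 1) ^ α = K ^ α * Real.exp (-(B / α ^ k)) := by
  rw [holderScale, Real.mul_rpow hK (Real.exp_pos _).le, ← Real.exp_mul]
  congr 2
  rw [pow_succ]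
  field_simp

lemma mul_rpow_lt_holderScale (hL : 0 < L) (hα0 : 0 < α) (hK : 0 ≤ K) (hLK : L * K ^ α ≤ K) {k : ℕ}
    {d : ℝ} (hd0 : 0 ≤ d) (hd : d < holderScale K B α (k + 1)) :
    L * d ^ α < holderScale K B α k :=
  calc L * d ^ α < L * holderScale K B α (k + 1) ^ α := by gcongr
    _ = L * K ^ α * Real.exp (-(B / α ^ k)) := by
      rw [holderScale_succ_rpow hK hα0.ne', mul_assoc]
    _ ≤ holderScale K B α k := by unfold holderScale; gcongr

lemma exists_one_lt_and_mul_rpow_le (hα1 : α < 1) (L : ℝ) : ∃ K : ℝ, 1 < K ∧ L * K ^ α ≤ K := by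
  obtain ⟨K, hK, hLK⟩ := ((eventually_gt_atTop 1).and
    ((tendsto_rpow_atTop (sub_pos.2 hα1)).eventually_ge_atTop L)).exists
  have hK0 : 0 < K := one_pos.trans hK
  refine ⟨K, hK, ?_⟩
  calc L * K ^ α ≤ K ^ (1 - α) * K ^ α := by gcongr
    _ = K := by rw [← Real.rpow_add hK0, sub_add_cancel, Real.rpow_one]

lemma exists_pos_and_mul_exp_neg_le (K : ℝ) {δ : ℝ} (hδ : 0 < δ) :
    ∃ B : ℝ, 0 < B ∧ K * Real.exp (-B) ≤ δ := by
  have tendsto_zero : Tendsto (fun B : ℝ => K * Real.exp (-B)) atTop (𝓝 0) := by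
    simpa using Real.tendsto_exp_neg_atTop_nhds_zero.const_mul K
  exact ((eventually_gt_atTop 0).and (tendsto_zero.eventually_le_const hδ)).exists

end HolderScale

section LogGauge

variable {α B K b : ℝ}

/-- The gauge function `t ↦ log (1 / t) ^ p`, meant for `p < 0` and small `t`. Its value at `0` is
`0 ^ p`, hence `0` for `p ≠ 0`, because `Real.log (1 / 0) = 0`. -/
noncomputable def logGauge (p : ℝ) (d : ℝ≥0∞) : ℝ≥0∞ :=
  ENNReal.ofReal (Real.log (1 / d.toReal) ^ p)

lemma exists_div_pow_le_and_inv_pow_le_mul_rpow_logb (hα0 : 0 < α) (hα1 : α < 1) (hb : 1 ≤ b)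
    (hB : 0 < B) {l : ℝ} (hl : B ≤ l) :
    ∃ k : ℕ, B / α ^ k ≤ l ∧
      b⁻¹ ^ k ≤ b * B ^ (-Real.logb α b) * l ^ Real.logb α b := by
  have hl0 : 0 < l := hB.trans_le hl
  have hb0 : 0 < b := one_pos.trans_le hb
  have logb_nonpos : Real.logb α b ≤ 0 :=
    div_nonpos_of_nonneg_of_nonpos (Real.log_nonneg hb) (Real.log_nonpos hα0.le hα1.le)
  obtain ⟨k, hk_lt, hk_le⟩ :=
    exists_nat_pow_near_of_lt_one (div_pos hB hl0) ((div_le_one hl0).2 hl) hα0 hα1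
  refine ⟨k, (div_le_comm₀ hl0 (by positivity)).1 hk_le, ?_⟩
  have hl_le : l ≤ B / α ^ (k + 1) := ((lt_div_comm₀ (by positivity) hl0).1 hk_lt).le
  have rpow_scale : (B / α ^ (k + 1)) ^ Real.logb α b = B ^ Real.logb α b / b ^ (k + 1) := by
    rw [Real.div_rpow hB.le (by positivity), ← Real.rpow_pow_comm hα0.le,
      Real.rpow_logb hα0 hα1.ne hb0]
  calc b⁻¹ ^ k = b * B ^ (-Real.logb α b) * (B / α ^ (k + 1)) ^ Real.logb α b := by
        rw [rpow_scale, Real.rpow_neg hB.le, inv_pow, pow_succ]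
        field_simp
    _ ≤ b * B ^ (-Real.logb α b) * l ^ Real.logb α b := by
      gcongr ?_ * ?_
      exact Real.rpow_le_rpow_of_nonpos hl0 hl_le logb_nonpos

lemma exists_lt_holderScale_and_inv_pow_le_logGauge {m : ℕ} (hm : 1 ≤ m) (hα0 : 0 < α)
    (hα1 : α < 1) (hB : 0 < B) (hK : 1 < K) {d : ℝ≥0∞} (hd0 : 0 < d)
    (hd : d ≤ ENNReal.ofReal (Real.exp (-B))) :
    ∃ k : ℕ, d < ENNReal.ofReal (holderScale K B α k) ∧
      (m : ℝ≥0∞)⁻¹ ^ k ≤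
        ENNReal.ofReal (m * B ^ (-Real.logb α m)) * logGauge (Real.logb α m) d := by
  lift d to NNReal using ne_top_of_le_ne_top ENNReal.ofReal_ne_top hd
  have hd_pos : (0 : ℝ) < d := by exact_mod_cast hd0
  have hm_pos : (0 : ℝ) < m := by exact_mod_cast hm
  have exp_neg_log : Real.exp (-Real.log (1 / d)) = d := by
    rw [one_div, Real.log_inv, neg_neg, Real.exp_log hd_pos]
  have hB_le : B ≤ Real.log (1 / d) := by
    rw [← neg_le_neg_iff, ← Real.exp_le_exp, exp_neg_log]
    exact ENNReal.toReal_le_of_le_ofReal (Real.exp_pos _).le hd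
  obtain ⟨k, hk, hweight⟩ :=
    exists_div_pow_le_and_inv_pow_le_mul_rpow_logb hα0 hα1 (Nat.one_le_cast.2 hm) hB hB_le
  refine ⟨k, ?_, ?_⟩
  · rw [ENNReal.lt_ofReal_iff_toReal_lt ENNReal.coe_ne_top]
    calc (d : ℝ) = Real.exp (-Real.log (1 / d)) := exp_neg_log.symm
      _ ≤ Real.exp (-(B / α ^ k)) := Real.exp_le_exp.2 (neg_le_neg hk)
      _ < holderScale K B α k := lt_mul_of_one_lt_left (Real.exp_pos _) hK
  · calc (m : ℝ≥0∞)⁻¹ ^ k = ENNReal.ofReal ((m : ℝ)⁻¹ ^ k) := by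
          rw [ENNReal.ofReal_pow (by positivity), ENNReal.ofReal_inv_of_pos hm_pos,
            ENNReal.ofReal_natCast]
      _ ≤ _ := by
        rw [logGauge, ← ENNReal.ofReal_mul (by positivity)]
        exact ENNReal.ofReal_le_ofReal hweight

end LogGauge

theorem hausdorff_gauge_measure_pos_of_separated_preimages_holder_general
    {E : Type*} [MetricSpace E] [MeasurableSpace E] [BorelSpace E]
    {X : Set E} (hXne : X.Nonempty) (hXc : IsCompact X) {f : E → E}
    {m : ℕ} (hm : 2 ≤ m) {δ : ℝ} (hδ : 0 < δ) (hsep : HasSeparatedPreimages f X m δ)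
    {α L : ℝ} (hα0 : 0 < α) (hα1 : α < 1) (hL : 0 < L)
    (hholder : ∀ x ∈ X, ∀ y ∈ X, dist (f x) (f y) ≤ L * dist x y ^ α) :
    0 < Measure.mkMetric (logGauge (Real.log m / Real.log α)) X := by
  obtain ⟨K, hK, hLK⟩ := exists_one_lt_and_mul_rpow_le hα1 L
  obtain ⟨B, hB, hBδ⟩ := exists_pos_and_mul_exp_neg_le K hδ
  have hK0 : 0 < K := one_pos.trans hK
  have weight_tendsto : Tendsto (fun k : ℕ => (m : ℝ≥0∞)⁻¹ ^ k) atTop (𝓝 0) :=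
    ENNReal.tendsto_pow_atTop_nhds_zero_of_lt_one (ENNReal.inv_lt_one.2 (by exact_mod_cast hm))
  have scale_le (k) : holderScale K B α (k + 1) ≤ δ :=
    (holderScale_le hK0.le hB.le hα0 hα1.le _).trans hBδ
  have dist_map_lt (k) (x) (hx : x ∈ X) (y) (hy : y ∈ X)
      (hxy : dist x y < holderScale K B α (k + 1)) : dist (f x) (f y) < holderScale K B α k :=
    (hholder x hx y hy).trans_lt (mul_rpow_lt_holderScale hL hα0 hK0.le hLK dist_nonneg hxy)
  refine (ENNReal.inv_pos.2 ENNReal.ofReal_ne_top).trans_le <|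
    inv_le_mkMetric_of_one_le_tsum_weight weight_tendsto
      (fun k => ENNReal.ofReal_pos.2 (holderScale_pos hK0 k))
      (ENNReal.ofReal_pos.2 (Real.exp_pos (-B)))
      (fun d hd0 hd => exists_lt_holderScale_and_inv_pow_le_logGauge
        (one_le_two.trans hm) hα0 hα1 hB hK hd0 hd)
      fun t k ht hXt => hsep.one_le_tsum_inv_pow_of_subset_iUnion hδ (by lia) hXne hXc
        scale_le dist_map_lt ht hXt

/-- If a continuous self-map of a nonempty compact set `X ⊆ ℝⁿ` has the
`(m,δ)`-separated preimage property and is Hölder continuous with exponent `α ∈ (0,1)`, then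
the generalized Hausdorff measure of `X` with respect to the gauge function
`h(t) = (log (1/t))^{(log m)/(log α)}` is positive. -/
theorem hausdorff_gauge_measure_pos_of_separated_preimages_holder
    (n : ℕ) (hn : 1 ≤ n)
    (X : Set (EuclideanSpace ℝ (Fin n))) (hXne : X.Nonempty) (hXc : IsCompact X)
    (f : EuclideanSpace ℝ (Fin n) → EuclideanSpace ℝ (Fin n))
    (hfc : ContinuousOn f X) (hfX : Set.MapsTo f X X)
    (m : ℕ) (hm : 2 ≤ m) (δ : ℝ) (hδ : 0 < δ)
    (hsep : ∀ y ∈ X, ∃ x : Fin m → EuclideanSpace ℝ (Fin n),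
      (∀ i, x i ∈ X ∧ f (x i) = y) ∧ ∀ i j, i ≠ j → δ ≤ dist (x i) (x j))
    (α L : ℝ) (hα0 : 0 < α) (hα1 : α < 1) (hL : 0 < L)
    (hholder : ∀ x ∈ X, ∀ y ∈ X, dist (f x) (f y) ≤ L * dist x y ^ α) :
    0 < MeasureTheory.Measure.mkMetric
      (fun d => ENNReal.ofReal (Real.log (1 / d.toReal) ^ (Real.log m / Real.log α))) X := by
  exact hausdorff_gauge_measure_pos_of_separated_preimages_holder_general
    hXne hXc hm hδ hsep hα0 hα1 hL hholder
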